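/- arXiv:1311.3190 — 2 statements merged into one kernel-verified Lean document; each statement's English description precedes it below -/
import Mathlib

section
/- Let F and G be continuous cumulative distribution functions on ℝ with G ≠ F, and let X_1, ..., X_n be i.i.d. with distribution G. Then for any ε > 0, the probability P( M_n(F(X_1), ..., F(X_n)) < (1+ε) / (4 ‖G-F‖_∞^2 · n) ) converges to 1 as n → ∞, where ‖G-F‖_∞ = sup_{t∈ℝ} |G(t)-F(t)|. -/
open MeasureTheory Filter Set

noncomputable section

/-- Density of the Beta(a,b) distribution on [0,1]. -/
def betaPDF (a b x : ℝ) : ℝ :=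
  x ^ (a - 1) * (1 - x) ^ (b - 1) / (Real.Gamma a * Real.Gamma b / Real.Gamma (a + b))

/-- Regularized incomplete beta function `I_x(a,b) = P(Beta(a,b) < x)`. -/
def regIncBeta (a b x : ℝ) : ℝ := ∫ t in Set.Ioc (0:ℝ) x, betaPDF a b t

/-- The `i`-th order statistic (0-based) of the sample `u`. -/
def orderStat {n : ℕ} (u : Fin n → ℝ) (i : Fin n) : ℝ := u (Tuple.sort u i)

/-- `p_{(i)} = P(Beta(i, n-i+1) < u_{(i)})` (with 1-based index `i = (i : Fin n) + 1`). -/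
def pOrd {n : ℕ} (u : Fin n → ℝ) (i : Fin n) : ℝ :=
  regIncBeta ((i : ℕ) + 1 : ℝ) ((n : ℝ) - (i : ℕ)) (orderStat u i)

/-- One-sided exact Berk-Jones statistic `M_n^+`. -/
def MnPlus {n : ℕ} (u : Fin n → ℝ) : ℝ := ⨅ i, pOrd u i

/-- One-sided exact Berk-Jones statistic `M_n^-`. -/
def MnMinus {n : ℕ} (u : Fin n → ℝ) : ℝ := ⨅ i, (1 - pOrd u i)

/-- Two-sided exact Berk-Jones statistic `M_n`. -/
def Mn {n : ℕ} (u : Fin n → ℝ) : ℝ := min (MnPlus u) (MnMinus u)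

/-- Joint law of `n` i.i.d. `U[0,1]` random variables (the null hypothesis). -/
def nullMeasure (n : ℕ) : Measure (Fin n → ℝ) :=
  Measure.pi fun _ => MeasureTheory.volume.restrict (Set.Icc (0:ℝ) 1)

end

/-- `F` is a continuous cumulative distribution function on ℝ. -/
def IsContinuousCDF (F : ℝ → ℝ) : Prop :=
  Continuous F ∧ Monotone F ∧
    Filter.Tendsto F Filter.atBot (nhds 0) ∧ Filter.Tendsto F Filter.atTop (nhds 1)

lemma bj_cont {a b : ℝ} (ha : 1 ≤ a) (hb : 1 ≤ b) : Continuous (betaPDF a b) := by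
  unfold betaPDF
  have h1 := Real.continuous_rpow_const (q := a - 1) (by linarith)
  have h2 := (Real.continuous_rpow_const (q := b - 1) (by linarith)).comp
    (continuous_const.sub continuous_id : Continuous fun x : ℝ => (1:ℝ) - x)
  exact (h1.mul h2).div_const _

lemma bj_nonneg {a b x : ℝ} (ha : 1 ≤ a) (hb : 1 ≤ b) (h0 : 0 ≤ x) (h1 : x ≤ 1) :
    0 ≤ betaPDF a b x := by
  unfold betaPDF
  have := Real.Gamma_pos_of_pos (show 0 < a by linarith)
  have := Real.Gamma_pos_of_pos (show 0 < b by linarith)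
  have := Real.Gamma_pos_of_pos (show 0 < a + b by linarith)
  have := Real.rpow_nonneg h0 (a - 1)
  have := Real.rpow_nonneg (show 0 ≤ 1 - x by linarith) (b - 1)
  positivity

lemma bj_mass {a b : ℝ} (ha : 1 ≤ a) (hb : 1 ≤ b) : ∫ t in Set.Ioc (0:ℝ) 1, betaPDF a b t = 1 := by
  have ha' : 0 < a := by linarith
  have hb' : 0 < b := by linarith
  have hB := ProbabilityTheory.beta_pos ha' hb'
  have key : ∫ t in Set.Ioc (0:ℝ) 1, t ^ (a - 1) * (1 - t) ^ (b - 1)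
      = ProbabilityTheory.beta a b := by
    rw [ProbabilityTheory.beta_eq_betaIntegralReal a b ha' hb', Complex.betaIntegral,
      intervalIntegral.integral_of_le (by norm_num), ← RCLike.re_to_complex, ← integral_re]
    · refine setIntegral_congr_fun measurableSet_Ioc fun x ⟨hx1, hx₂⟩ ↦ ?_
      norm_cast
      rw [← Complex.ofReal_cpow, ← Complex.ofReal_cpow, RCLike.re_to_complex,
        Complex.re_mul_ofReal, Complex.ofReal_re]
      all_goals linarith
    · have := Complex.betaIntegral_convergent (u := a) (v := b) (by simpa) (by simpa)
      rwa [intervalIntegrable_iff_integrableOn_Ioc_of_le (by simp), IntegrableOn] at this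
  unfold betaPDF
  rw [integral_div, key]
  exact div_self hB.ne'

lemma bj_shift {a b x : ℝ} (ha : 1 ≤ a) (hb : 1 ≤ b) (hx : 0 < x) :
    x * betaPDF a b x = a / (a + b) * betaPDF (a + 1) b x := by
  unfold betaPDF
  have h1 := Real.Gamma_pos_of_pos (show 0 < a by linarith)
  have h2 := Real.Gamma_pos_of_pos (show 0 < b by linarith)
  have h3 := Real.Gamma_pos_of_pos (show 0 < a + b by linarith)
  rw [show a + 1 + b = (a + b) + 1 by ring, Real.Gamma_add_one (by linarith : a ≠ 0),
    Real.Gamma_add_one (by linarith : a + b ≠ 0),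
    show a + 1 - 1 = (a - 1) + 1 by ring, Real.rpow_add_one hx.ne']
  have : a ≠ 0 := by linarith
  have : a + b ≠ 0 := by linarith
  field_simp

lemma bj_intOn {f : ℝ → ℝ} (hf : Continuous f) (a b : ℝ) : IntegrableOn f (Set.Ioc a b) :=
  (hf.integrableOn_Icc).mono_set Set.Ioc_subset_Icc_self

lemma bj_mom1 {a b : ℝ} (ha : 1 ≤ a) (hb : 1 ≤ b) :
    ∫ t in Set.Ioc (0:ℝ) 1, t * betaPDF a b t = a / (a + b) := by
  rw [setIntegral_congr_fun measurableSet_Ioc (fun x hx => bj_shift ha hb hx.1),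
    integral_const_mul, bj_mass (by linarith) hb, mul_one]

lemma bj_mom2 {a b : ℝ} (ha : 1 ≤ a) (hb : 1 ≤ b) :
    ∫ t in Set.Ioc (0:ℝ) 1, t ^ 2 * betaPDF a b t = a / (a + b) * ((a + 1) / (a + 1 + b)) := by
  have : ∀ x ∈ Set.Ioc (0:ℝ) 1, x ^ 2 * betaPDF a b x
      = a / (a + b) * (x * betaPDF (a + 1) b x) := by
    intro x hx
    rw [sq, mul_assoc, bj_shift ha hb hx.1]; ring
  rw [setIntegral_congr_fun measurableSet_Ioc this,
    integral_const_mul, bj_mom1 (by linarith) hb]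

lemma bj_var {a b : ℝ} (ha : 1 ≤ a) (hb : 1 ≤ b) :
    ∫ t in Set.Ioc (0:ℝ) 1, (t - a / (a + b)) ^ 2 * betaPDF a b t ≤ 1 / (4 * (a + b + 1)) := by
  have hc := bj_cont ha hb
  have e : ∀ x ∈ Set.Ioc (0:ℝ) 1, (x - a / (a + b)) ^ 2 * betaPDF a b x
      = x ^ 2 * betaPDF a b x - (2 * (a / (a + b))) * (x * betaPDF a b x)
        + (a / (a + b)) ^ 2 * betaPDF a b x := by
    intro x _; ring
  rw [setIntegral_congr_fun measurableSet_Ioc e, integral_add, integral_sub, integral_const_mul,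
    integral_const_mul, bj_mom1 ha hb, bj_mom2 ha hb, bj_mass ha hb]
  · have h1 : 0 < a + b := by linarith
    have e2 : a / (a + b) * ((a + 1) / (a + 1 + b)) - 2 * (a / (a + b)) * (a / (a + b))
        + (a / (a + b)) ^ 2 * 1 = a * b / ((a + b) ^ 2 * (a + b + 1)) := by
      have : a + 1 + b ≠ 0 := by linarith
      have : a + b + 1 ≠ 0 := by linarith
      field_simp
      ring
    rw [e2, div_le_div_iff₀ (by positivity) (by positivity)]
    nlinarith [mul_nonneg (sq_nonneg (a - b)) (by linarith : 0 ≤ a + b + 1)]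
  · exact bj_intOn (by fun_prop) _ _
  · exact bj_intOn (by fun_prop) _ _
  · exact (bj_intOn (by fun_prop) _ _ : IntegrableOn _ _ _).sub (bj_intOn (by fun_prop) _ _)
  · exact bj_intOn (by fun_prop) _ _

/-- Chebyshev on a measurable subset. -/
lemma bj_cheb {a b c : ℝ} (ha : 1 ≤ a) (hb : 1 ≤ b) (hc : 0 < c) (s : Set ℝ)
    (hs : MeasurableSet s) (hsub : s ⊆ Set.Ioc 0 1) (hfar : ∀ x ∈ s, c ^ 2 ≤ (x - a / (a + b)) ^ 2) :
    ∫ t in s, betaPDF a b t ≤ 1 / (4 * (a + b + 1) * c ^ 2) := by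
  have hcont := bj_cont ha hb
  have hI : IntegrableOn (fun t => (t - a / (a + b)) ^ 2 * betaPDF a b t) (Set.Ioc 0 1) :=
    bj_intOn (by fun_prop) _ _
  have h1 : c ^ 2 * ∫ t in s, betaPDF a b t ≤ 1 / (4 * (a + b + 1)) := by
    rw [← integral_const_mul]
    refine le_trans ?_ (bj_var ha hb)
    refine le_trans (setIntegral_mono_on (((bj_intOn hcont 0 1).mono_set hsub).const_mul _)
      (hI.mono_set hsub) hs ?_) (setIntegral_mono_set hI ?_ hsub.eventuallyLE)
    · intro x hx
      exact mul_le_mul_of_nonneg_right (hfar x hx) (bj_nonneg ha hb (hsub hx).1.le (hsub hx).2)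
    · refine ae_restrict_of_forall_mem measurableSet_Ioc fun x hx => ?_
      exact mul_nonneg (sq_nonneg _) (bj_nonneg ha hb hx.1.le hx.2)
  rw [← div_div, le_div_iff₀ (by positivity)]
  linarith

lemma bj_lower {a b c y f : ℝ} (ha : 1 ≤ a) (hb : 1 ≤ b) (hc : 0 < c) (hy : y ≤ f) (hf : f ≤ 1)
    (hm : c ≤ a / (a + b) - f) : regIncBeta a b y ≤ 1 / (4 * (a + b + 1) * c ^ 2) := by
  refine bj_cheb ha hb hc _ measurableSet_Ioc (Set.Ioc_subset_Ioc_right (hy.trans hf)) ?_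
  intro x hx
  have := hx.2
  nlinarith

lemma bj_upper {a b c y f : ℝ} (ha : 1 ≤ a) (hb : 1 ≤ b) (hc : 0 < c) (hy : f ≤ y) (hf : 0 ≤ f)
    (hy1 : y ≤ 1)
    (hm : c ≤ f - a / (a + b)) : 1 - regIncBeta a b y ≤ 1 / (4 * (a + b + 1) * c ^ 2) := by
  have hcont := bj_cont ha hb
  have : 1 - regIncBeta a b y = ∫ t in Set.Ioc y 1, betaPDF a b t := by
    have := setIntegral_union (Set.Ioc_disjoint_Ioc_of_le (le_refl y) : Disjoint (Set.Ioc 0 y) (Set.Ioc y 1))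
      measurableSet_Ioc (bj_intOn hcont _ _) (bj_intOn hcont _ _)
    rw [Set.Ioc_union_Ioc_eq_Ioc (hf.trans hy) hy1, bj_mass ha hb] at this
    unfold regIncBeta
    linarith
  rw [this]
  refine bj_cheb ha hb hc _ measurableSet_Ioc (Set.Ioc_subset_Ioc_left (hf.trans hy)) ?_
  intro x hx
  have := hx.1
  nlinarith

lemma bj_card {n : ℕ} (u : Fin n → ℝ) (p : ℝ → Prop) [DecidablePred p] :
    (Finset.univ.filter fun i => p ((u ∘ Tuple.sort u) i)).card
      = (Finset.univ.filter fun i => p (u i)).card := by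
  refine Finset.card_bij (fun i _ => Tuple.sort u i) ?_ ?_ ?_
  · intro i hi; simpa using hi
  · intro i _ j _ h; simpa using h
  · intro i hi; exact ⟨(Tuple.sort u).symm i, by simpa using hi, by simp⟩

lemma bj_os_le {n : ℕ} (u : Fin n → ℝ) (f : ℝ) (k : Fin n)
    (h : (k : ℕ) < (Finset.univ.filter fun i => u i ≤ f).card) : orderStat u k ≤ f := by
  rw [← bj_card u (· ≤ f)] at h
  exact (Tuple.lt_card_le_iff_apply_le_of_monotone (Tuple.monotone_sort u)).1 h

lemma bj_os_ge {n : ℕ} (u : Fin n → ℝ) (f : ℝ) (k : Fin n)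
    (h : (Finset.univ.filter fun i => u i < f).card ≤ (k : ℕ)) : f ≤ orderStat u k := by
  rw [← bj_card u (· < f)] at h
  by_contra hlt
  exact absurd ((Tuple.lt_card_lt_iff_apply_lt_of_monotone (Tuple.monotone_sort u)).2
    (not_le.1 hlt)) (not_lt.2 h)

/-- Number of sample points at most `t`. -/
noncomputable def bjN (t : ℝ) {n : ℕ} (X : Fin n → ℝ) : ℕ := (Finset.univ.filter fun i => X i ≤ t).card

lemma bj_lln (μ : Measure ℝ) [IsProbabilityMeasure μ] (t δ : ℝ) (hδ : 0 < δ) (n : ℕ) (hn : 0 < n) :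
    (Measure.pi fun _ : Fin n => μ)
      {X | n * δ ≤ |(bjN t X : ℝ) - n * (μ (Set.Iic t)).toReal|}
      ≤ ENNReal.ofReal (1 / (4 * n * δ ^ 2)) := by
  have hnR : (0:ℝ) < n := by exact_mod_cast hn
  let g : ℝ → ℝ := (Set.Iic t).indicator fun _ => 1
  have hg : Measurable g := measurable_const.indicator measurableSet_Iic
  have hb : ∀ x, g x ∈ Set.Icc (0:ℝ) 1 := by
    intro x; by_cases h : x ∈ Set.Iic t <;> simp [g, h]
  have hmem : MemLp g 2 μ := memLp_of_bounded (ae_of_all _ hb) hg.aestronglyMeasurable 2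
  let S : (Fin n → ℝ) → ℝ := ∑ i, fun ω : Fin n → ℝ => g (ω i)
  have hS : ∀ X, S X = (bjN t X : ℝ) := by
    intro X
    simp [S, g, bjN, Finset.sum_apply, Set.indicator_apply, Finset.sum_boole]
  have hmi : ∀ i : Fin n, MemLp (fun ω : Fin n → ℝ => g (ω i)) 2 (Measure.pi fun _ => μ) :=
    fun i => memLp_of_bounded (ae_of_all _ fun ω : Fin n → ℝ => hb (ω i))
      (hg.comp (measurable_pi_apply i)).aestronglyMeasurable 2
  have hSm : MemLp S 2 (Measure.pi fun _ : Fin n => μ) := memLp_finsetSum' _ fun i _ => hmi i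
  have hE : ∫ X, S X ∂(Measure.pi fun _ : Fin n => μ) = n * (μ (Set.Iic t)).toReal := by
    simp only [S, Finset.sum_apply]
    rw [integral_finsetSum _ fun i _ => (hmi i).integrable (by norm_num)]
    have : ∀ i : Fin n, ∫ ω, g (ω i) ∂(Measure.pi fun _ : Fin n => μ) = (μ (Set.Iic t)).toReal := by
      intro i
      rw [← integral_map (μ := Measure.pi fun _ : Fin n => μ) (φ := fun ω => ω i) (f := g)
        (measurable_pi_apply i).aemeasurable hg.aestronglyMeasurable,
        (measurePreserving_eval (fun _ : Fin n => μ) i).map_eq]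
      simp only [g]
      rw [integral_indicator measurableSet_Iic]
      simp [Measure.real]
    simp [this]
  have hV : ProbabilityTheory.variance S (Measure.pi fun _ : Fin n => μ) ≤ n * (1 / 4) := by
    have h1 := ProbabilityTheory.variance_sum_pi (μ := fun _ : Fin n => μ)
      (X := fun _ => g) fun _ => hmem
    have h2 := ProbabilityTheory.variance_le_sq_of_bounded (ae_of_all μ hb) hg.aemeasurable
    simp only [S]
    rw [h1]
    simp only [Finset.sum_const, Finset.card_univ, Fintype.card_fin, nsmul_eq_mul]
    refine mul_le_mul_of_nonneg_left (h2.trans (by norm_num)) hnR.le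
  have := ProbabilityTheory.meas_ge_le_variance_div_sq hSm (c := n * δ) (by positivity)
  rw [hE] at this
  simp only [hS] at this
  refine this.trans (ENNReal.ofReal_le_ofReal ?_)
  calc _ ≤ n * (1 / 4) / (n * δ) ^ 2 := by gcongr
    _ = _ := by field_simp

lemma bj_Mn_le1 {n : ℕ} (u : Fin n → ℝ) (k : Fin n) : Mn u ≤ pOrd u k :=
  (min_le_left _ _).trans (ciInf_le (Set.finite_range _).bddBelow k)

lemma bj_Mn_le2 {n : ℕ} (u : Fin n → ℝ) (k : Fin n) : Mn u ≤ 1 - pOrd u k :=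
  (min_le_right _ _).trans (ciInf_le (Set.finite_range fun i => 1 - pOrd u i).bddBelow k)

lemma bj_det (F : ℝ → ℝ) (hmono : Monotone F) (hF0 : ∀ x, 0 ≤ F x) (hF1 : ∀ x, F x ≤ 1)
    (t g c δ : ℝ) (hg0 : 0 ≤ g) (hg1 : g ≤ 1)
    (hc : 0 < c) (hδ : 0 < δ) (hd : |g - F t| = c + 2 * δ) (n : ℕ) (hn : 0 < n)
    (hnδ : 1 ≤ (n + 1) * δ) (X : Fin n → ℝ) (hX : |(bjN t X : ℝ) - n * g| < n * δ) :
    Mn (fun i => F (X i)) ≤ 1 / (4 * (n + 2) * c ^ 2) := by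
  have hnR : (0:ℝ) < n := by exact_mod_cast hn
  obtain ⟨hX1, hX2⟩ := abs_lt.1 hX
  have hf0 := hF0 t
  have hf1 := hF1 t
  set N := bjN t X with hN
  rcases le_total (F t) g with hle | hle
  · rw [abs_of_nonneg (by linarith)] at hd
    have hNpos : 0 < N := by
      have : (0:ℝ) < N := by nlinarith
      exact_mod_cast this
    have hNn : N ≤ n := by
      simpa [hN, bjN] using Finset.card_filter_le (Finset.univ : Finset (Fin n)) (fun i => X i ≤ t)
    let k : Fin n := ⟨N - 1, by omega⟩
    refine (bj_Mn_le1 _ k).trans ?_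
    have hos : orderStat (fun i => F (X i)) k ≤ F t := by
      apply bj_os_le
      have : N ≤ (Finset.univ.filter fun i => F (X i) ≤ F t).card := by
        refine Finset.card_le_card fun i hi => ?_
        simp only [Finset.mem_filter, Finset.mem_univ, true_and] at hi ⊢
        exact hmono hi
      simp only [k]; omega
    have hk : ((k : ℕ) : ℝ) + 1 = N := by
      simp only [k]; rw [Nat.cast_sub (by omega)]; simp
    have hNnR : (N : ℝ) ≤ n := by exact_mod_cast hNn
    have hN1 : (1:ℝ) ≤ N := by exact_mod_cast hNpos
    unfold pOrd
    have hk' : (n : ℝ) - (k : ℕ) = n - N + 1 := by linarith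
    rw [hk, hk']
    have := bj_lower (a := N) (b := n - N + 1) (c := c) hN1 (by linarith) hc hos hf1 ?_
    · rwa [show (N : ℝ) + (n - N + 1) + 1 = n + 2 by ring] at this
    · rw [show (N : ℝ) + (n - N + 1) = n + 1 by ring, le_sub_iff_add_le, le_div_iff₀ (by positivity)]
      nlinarith
  · rw [abs_of_nonpos (by linarith)] at hd
    have hNn : N < n := by
      have : (N : ℝ) < n := by nlinarith
      exact_mod_cast this
    let k : Fin n := ⟨N, hNn⟩
    refine (bj_Mn_le2 _ k).trans ?_
    have hos : F t ≤ orderStat (fun i => F (X i)) k := by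
      apply bj_os_ge
      change _ ≤ (Finset.univ.filter fun i => X i ≤ t).card
      refine Finset.card_le_card fun i hi => ?_
      simp only [Finset.mem_filter, Finset.mem_univ, true_and] at hi ⊢
      by_contra hlt
      exact absurd (hmono (not_le.1 hlt).le) (not_le.2 hi)
    have hNnR : (N : ℝ) + 1 ≤ n := by exact_mod_cast hNn
    have hN0 : (0:ℝ) ≤ N := by positivity
    unfold pOrd
    have hk : ((k : ℕ) : ℝ) = N := rfl
    rw [hk]
    have := bj_upper (a := N + 1) (b := n - N) (c := c) (by linarith) (by linarith) hc hos hf0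
      (hF1 _) ?_
    · rwa [show (N : ℝ) + 1 + (n - N) + 1 = n + 2 by ring] at this
    · rw [show (N : ℝ) + 1 + (n - N) = n + 1 by ring, le_sub_comm, div_le_iff₀ (by positivity)]
      nlinarith

theorem berk_jones_Mn_fixed_alternative (F G : ℝ → ℝ)
    (hF : IsContinuousCDF F) (hG : IsContinuousCDF G) (hne : G ≠ F)
    (μG : Measure ℝ) [IsProbabilityMeasure μG]
    (hμG : ∀ t : ℝ, (μG (Set.Iic t)).toReal = G t)
    (ε : ℝ) (hε : 0 < ε) :
    Filter.Tendsto (fun n : ℕ =>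
        ((Measure.pi fun _ : Fin n => μG)
          {X | Mn (fun i => F (X i)) <
            (1 + ε) / (4 * (⨆ t : ℝ, |G t - F t|) ^ 2 * n)}).toReal)
      Filter.atTop (nhds 1) := by
  have hF0 : ∀ x, 0 ≤ F x := fun x => hF.2.1.le_of_tendsto hF.2.2.1 x
  have hF1 : ∀ x, F x ≤ 1 := fun x => hF.2.1.ge_of_tendsto hF.2.2.2 x
  have hG0 : ∀ x, 0 ≤ G x := fun x => hG.2.1.le_of_tendsto hG.2.2.1 x
  have hG1 : ∀ x, G x ≤ 1 := fun x => hG.2.1.ge_of_tendsto hG.2.2.2 x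
  have hbdd : BddAbove (Set.range fun t => |G t - F t|) := by
    refine ⟨1, ?_⟩
    rintro _ ⟨x, rfl⟩
    exact abs_le.2 ⟨by linarith [hF1 x, hG0 x], by linarith [hF0 x, hG1 x]⟩
  have hD : 0 < ⨆ t : ℝ, |G t - F t| := by
    obtain ⟨x, hx⟩ := Function.ne_iff.1 hne
    exact lt_of_lt_of_le (abs_pos.2 (sub_ne_zero.2 hx)) (le_ciSup hbdd x)
  set D := ⨆ t : ℝ, |G t - F t| with hDdef
  have hsq : 1 < Real.sqrt (1 + ε) := by
    rw [Real.lt_sqrt (by norm_num)]; linarith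
  set c := D / Real.sqrt (1 + ε) with hcdef
  have hc : 0 < c := by positivity
  have hcD : c < D := div_lt_self hD hsq
  have hc2 : c ^ 2 = D ^ 2 / (1 + ε) := by
    rw [hcdef, div_pow, Real.sq_sqrt (by linarith)]
  obtain ⟨t, ht⟩ := exists_lt_of_lt_ciSup hcD
  set δ := (|G t - F t| - c) / 2 with hδdef
  have hδ : 0 < δ := by linarith
  have hlow : Tendsto (fun n : ℕ => 1 - 1 / (4 * (n:ℝ) * δ ^ 2)) atTop (nhds 1) := by
    have h : Tendsto (fun n : ℕ => 1 / (4 * δ ^ 2) * (n:ℝ)⁻¹) atTop (nhds (1 / (4 * δ ^ 2) * 0)) :=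
      tendsto_inv_atTop_nhds_zero_nat.const_mul _
    have h' := h.const_sub 1
    simp only [mul_zero, sub_zero] at h'
    refine h'.congr fun n => ?_
    rw [← one_div, div_mul_div_comm]; ring_nf
  refine tendsto_of_tendsto_of_tendsto_of_le_of_le' hlow tendsto_const_nhds ?_
    (Eventually.of_forall fun n => ENNReal.toReal_le_of_le_ofReal zero_le_one (by simpa using prob_le_one))
  obtain ⟨n₀, hn₀⟩ := exists_nat_gt (1 / δ)
  filter_upwards [eventually_ge_atTop (max n₀ 1)] with n hn
  have hn1 : 0 < n := lt_of_lt_of_le one_pos ((le_max_right _ _).trans hn)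
  have hnR : (0:ℝ) < n := by exact_mod_cast hn1
  have hn2 : (n₀ : ℝ) ≤ n := by exact_mod_cast (le_max_left _ _).trans hn
  have hnδ : 1 ≤ ((n:ℝ) + 1) * δ := by
    rw [← div_le_iff₀ hδ]; linarith
  set P := Measure.pi fun _ : Fin n => μG
  set E := {X : Fin n → ℝ | Mn (fun i => F (X i)) < (1 + ε) / (4 * D ^ 2 * n)}
  set B := {X : Fin n → ℝ | n * δ ≤ |(bjN t X : ℝ) - n * (μG (Set.Iic t)).toReal|}
  have hB : P B ≤ ENNReal.ofReal (1 / (4 * n * δ ^ 2)) := bj_lln μG t δ hδ n hn1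
  have hcov : (Set.univ : Set (Fin n → ℝ)) ⊆ E ∪ B := by
    intro X _
    by_cases hX : X ∈ B
    · exact Or.inr hX
    · left
      have hX' : |(bjN t X : ℝ) - n * G t| < n * δ := by
        have : |(bjN t X : ℝ) - n * (μG (Set.Iic t)).toReal| < n * δ := lt_of_not_ge hX
        rwa [hμG] at this
      have := bj_det F hF.2.1 hF0 hF1 t (G t) c δ (hG0 t) (hG1 t) hc hδ (by rw [hδdef]; ring) n hn1
        hnδ X hX'
      refine lt_of_le_of_lt this ?_
      have e : (1 + ε) / (4 * D ^ 2 * n) = 1 / (4 * n * c ^ 2) := by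
        rw [hc2]; field_simp
      rw [e]
      apply one_div_lt_one_div_of_lt (by positivity)
      have : 0 < c ^ 2 := by positivity
      nlinarith
  have h1 : (1:ENNReal) ≤ P E + P B := by
    calc (1:ENNReal) = P Set.univ := by simp [P]
      _ ≤ P (E ∪ B) := measure_mono hcov
      _ ≤ _ := measure_union_le _ _
  have h2 : (1:ℝ) ≤ (P E).toReal + (P B).toReal := by
    rw [← ENNReal.toReal_add (measure_ne_top _ _) (measure_ne_top _ _), ← ENNReal.toReal_one]
    exact ENNReal.toReal_mono (by simp) h1
  have h3 : (P B).toReal ≤ 1 / (4 * n * δ ^ 2) :=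
    ENNReal.toReal_le_of_le_ofReal (by positivity) hB
  linarith
end

section
/- Let ε > 0 and a > 0, and let f: ℝ → ℝ be a non-negative function satisfying ∫_ℝ f(x) dx = 1 and f(x) ≥ (1/√(2π)) e^{-x²/2} (1 - ε) for all x ∈ [-a, a]. Then for any t ∈ [0, a], ∫_{-∞}^{-t} f(x) dx ≤ (1/√(2π)) (1/t) e^{-t²/2} + (1/√(2π)) (1/a) e^{-a²/2} + ε. -/
open MeasureTheory Filter Set

lemma aux_int : Integrable (fun x : ℝ => Real.exp (-x^2 / 2)) := by
  have h := integrable_exp_neg_mul_sq (b := 1/2) (by norm_num)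
  refine h.congr (ae_of_all _ fun x => ?_)
  show Real.exp _ = Real.exp _
  congr 1; ring

lemma aux_int_mul : Integrable (fun x : ℝ => x * Real.exp (-x^2 / 2)) := by
  have h := integrable_mul_exp_neg_mul_sq (b := 1/2) (by norm_num)
  refine h.congr (ae_of_all _ fun x => ?_)
  show x * Real.exp _ = x * Real.exp _
  congr 2; ring

lemma aux_total : ∫ x : ℝ, Real.exp (-x^2 / 2) = Real.sqrt (2 * Real.pi) := by
  have h := integral_gaussian (1/2)
  have e : (fun x : ℝ => Real.exp (-x^2 / 2)) = fun x : ℝ => Real.exp (-(1/2) * x^2) := by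
    funext x; congr 1; ring
  rw [e, h]; congr 1; ring

lemma aux_mills (s : ℝ) (hs : 0 < s) :
    ∫ x in Ioi s, Real.exp (-x^2 / 2) ≤ (1 / s) * Real.exp (-s^2 / 2) := by
  have h1 : ∫ x in Ioi s, x * Real.exp (-x^2 / 2) = 0 - (-Real.exp (-s^2 / 2)) := by
    refine integral_Ioi_of_hasDerivAt_of_tendsto' (f := fun x : ℝ => -Real.exp (-x^2 / 2))
      (fun x _ => ?_) aux_int_mul.integrableOn ?_
    · have h : HasDerivAt (fun x : ℝ => -x^2 / 2) (-x) x := by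
        have := ((hasDerivAt_pow 2 x).neg).div_const 2
        convert! this using 1
        norm_num; ring
      convert! h.exp.neg using 1
      ring
    · rw [← neg_zero]
      refine Tendsto.neg (Real.tendsto_exp_atBot.comp ?_)
      have h : Tendsto (fun x : ℝ => x^2 / 2) atTop atTop :=
        (tendsto_pow_atTop (by norm_num)).atTop_div_const (by norm_num)
      refine (tendsto_neg_atTop_atBot.comp h).congr fun x => ?_
      simp only [Function.comp]; ring
  calc ∫ x in Ioi s, Real.exp (-x^2 / 2)
      ≤ ∫ x in Ioi s, (1 / s) * (x * Real.exp (-x^2 / 2)) := by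
        refine setIntegral_mono_on aux_int.integrableOn
          (aux_int_mul.const_mul _).integrableOn measurableSet_Ioi fun x hx => ?_
        have hx' : s < x := hx
        rw [← mul_assoc]
        refine le_mul_of_one_le_left (Real.exp_pos _).le ?_
        rw [one_div, inv_mul_eq_div, le_div_iff₀ hs]; linarith
    _ = (1 / s) * Real.exp (-s^2 / 2) := by
        rw [integral_const_mul, h1]; ring

theorem nearly_gaussian_density_tail (ε a : ℝ) (hε : 0 < ε) (ha : 0 < a)
    (f : ℝ → ℝ) (hf0 : ∀ x, 0 ≤ f x)
    (hfi : MeasureTheory.Integrable f)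
    (hf1 : ∫ x : ℝ, f x = 1)
    (hflb : ∀ x ∈ Set.Icc (-a) a,
      (1 / Real.sqrt (2 * Real.pi)) * Real.exp (-x^2 / 2) * (1 - ε) ≤ f x)
    (t : ℝ) (ht : t ∈ Set.Ioc (0:ℝ) a) :
    ∫ x in Set.Iic (-t), f x ≤
      (1 / Real.sqrt (2 * Real.pi)) * (1 / t) * Real.exp (-t^2 / 2) +
        (1 / Real.sqrt (2 * Real.pi)) * (1 / a) * Real.exp (-a^2 / 2) + ε := by
  obtain ⟨ht0, hta⟩ := ht
  set c := 1 / Real.sqrt (2 * Real.pi) with hc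
  have hsq : 0 < Real.sqrt (2 * Real.pi) := Real.sqrt_pos.2 (by positivity)
  have hc0 : 0 < c := by positivity
  set G := ∫ x in Ioc (-t) a, Real.exp (-x^2 / 2) with hG
  have split : ∀ h : ℝ → ℝ, Integrable h →
      ∫ x, h x = (∫ x in Iic (-t), h x) + ((∫ x in Ioc (-t) a, h x) + ∫ x in Ioi a, h x) := by
    intro h hh
    have e1 := intervalIntegral.integral_Iic_add_Ioi (b := -t) (f := h) (μ := volume)
      hh.integrableOn hh.integrableOn
    have e2 := setIntegral_union (f := h) (μ := volume) (s := Ioc (-t) a) (t := Ioi a)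
      (Set.Ioc_disjoint_Ioi le_rfl) measurableSet_Ioi hh.integrableOn hh.integrableOn
    rw [Ioc_union_Ioi_eq_Ioi (by linarith)] at e2
    rw [← e1, e2]
  have hsf := split f hfi
  have hsg := split _ aux_int
  rw [aux_total] at hsg
  have hneg : ∫ x in Iic (-t), Real.exp (-x^2 / 2) = ∫ x in Ioi t, Real.exp (-x^2 / 2) := by
    have := integral_comp_neg_Iic (-t) (fun x : ℝ => Real.exp (-x^2 / 2))
    simpa using this
  rw [hneg] at hsg
  have m1 := aux_mills t ht0
  have m2 := aux_mills a ha
  have p1 : 0 ≤ ∫ x in Ioi t, Real.exp (-x^2 / 2) := integral_nonneg fun x => (Real.exp_pos _).le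
  have p2 : 0 ≤ ∫ x in Ioi a, Real.exp (-x^2 / 2) := integral_nonneg fun x => (Real.exp_pos _).le
  have p3 : 0 ≤ ∫ x in Ioi a, f x := integral_nonneg hf0
  have lb : c * (1 - ε) * G ≤ ∫ x in Ioc (-t) a, f x := by
    rw [hG, ← integral_const_mul]
    refine setIntegral_mono_on (aux_int.const_mul _).integrableOn hfi.integrableOn
      measurableSet_Ioc fun x hx => ?_
    have := hflb x ⟨by linarith [hx.1], hx.2⟩
    linarith
  have hcs : c * Real.sqrt (2 * Real.pi) = 1 := by rw [hc]; field_simp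
  rw [← hG] at hsg
  rw [hsg] at hcs
  have q1 := mul_le_mul_of_nonneg_left m1 hc0.le
  have q2 := mul_le_mul_of_nonneg_left m2 hc0.le
  have r1 := mul_nonneg hc0.le p1
  have r2 := mul_nonneg hc0.le p2
  have hcG : ε * (c * G) ≤ ε * 1 := mul_le_mul_of_nonneg_left (by linarith) hε.le
  linarith
end
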